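/- The last token satisfies the condition: for every nonempty string s, the last token θ(s) is a canonical token that is a suffix of s, and θ(s) satisfies the Prefix Last-Token Condition with respect to s. -/

import Mathlib

/-!
Common BPE formalization preamble.

A token is a (nonempty) string over the alphabet `α`, modeled as `List α`.
A merge rule is a pair of tokens; a dictionary is an ordered list of rules
(earlier rules have strictly higher priority).
-/

namespace BPE

variable {α : Type*} [DecidableEq α]

/-- A token is a string over the alphabet (nonemptiness is imposed by hypotheses). -/
abbrev Token (α : Type*) := List α

/-- A merge rule is an ordered pair of tokens. -/
abbrev Rule (α : Type*) := Token α × Token α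

/-- A dictionary is an ordered list of merge rules; earlier = higher priority. -/
abbrev Dict (α : Type*) := List (Rule α)

/-- Apply a single merge rule to a token list, scanning left to right and replacing
each adjacent occurrence of `r.1` followed by `r.2` by the concatenated token,
resuming the scan after the newly formed token (no overlaps). -/
def applyRule (r : Rule α) : List (Token α) → List (Token α)
  | [] => []
  | [t] => [t]
  | t :: u :: rest =>
      if t = r.1 ∧ u = r.2 then (r.1 ++ r.2) :: applyRule r rest
      else t :: applyRule r (u :: rest)

/-- `φ₀(s)`: the list of single-character tokens of `s`. -/
def phi0 (s : List α) : List (Token α) := s.map (fun c => [c])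

/-- `φ_k(s)`: the token list after applying the first `k` rules of `D` to `s`. -/
def phiK (D : Dict α) (k : ℕ) (s : List α) : List (Token α) :=
  (D.take k).foldl (fun φ r => applyRule r φ) (phi0 s)

/-- The BPE tokenization `𝕋_D(s)`. -/
def tokenize (D : Dict α) (s : List α) : List (Token α) :=
  phiK D D.length s

/-- Detokenization `π`: concatenation of the tokens. -/
def detok (φ : List (Token α)) : List α := φ.flatten

/-- A dictionary is valid if all rule components are genuine (nonempty) tokens. -/
def ValidDict (D : Dict α) : Prop := ∀ r ∈ D, r.1 ≠ [] ∧ r.2 ≠ []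

/-- A token `t` is canonical if `𝕋_D(t) = [t]`. -/
def IsCanonical (D : Dict α) (t : Token α) : Prop := tokenize D t = [t]

/-- The last token `θ(s)`: last element of `𝕋_D(s)` (defaulting to `[]`). -/
def theta (D : Dict α) (s : List α) : Token α := (tokenize D s).getLastD []

/-- `j` (0-based) is the index of the canonical rule of `t`:
`φ_j(t)` has exactly two tokens and `φ_{j+1}(t) = [t]`. -/
def IsCanonicalRuleIdx (D : Dict α) (t : Token α) (j : ℕ) : Prop :=
  j < D.length ∧ (phiK D j t).length = 2 ∧ phiK D (j + 1) t = [t]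

open Classical in
/-- The (0-based) index of the canonical rule of `t` (junk value `0` if none exists). -/
noncomputable def canonIdx (D : Dict α) (t : Token α) : ℕ :=
  if h : ∃ j, IsCanonicalRuleIdx D t j then h.choose else 0

/-- Predecessor `pre(t)`: first token of the two-token stage `φ_{j-1}(t)`. -/
noncomputable def pre (D : Dict α) (t : Token α) : Token α :=
  (phiK D (canonIdx D t) t).headD []

/-- Successor `suc(t)`: second token of the two-token stage `φ_{j-1}(t)`. -/
noncomputable def suc (D : Dict α) (t : Token α) : Token α :=
  (phiK D (canonIdx D t) t).getLastD []

/-- `InPath D x a` means `a ∈ P(x)`: `a` is obtained from `x` by iterating `suc`,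
i.e. `a` lies on the ancestor path of `x` in the Successor Forest. -/
def InPath (D : Dict α) (x a : Token α) : Prop :=
  ∃ n : ℕ, (suc D)^[n] x = a

/-- `s` with the suffix `u` removed. -/
def dropSuffix (s u : List α) : List α := s.take (s.length - u.length)

/-- The Prefix Last-Token Condition of the canonical suffix token `t`
with respect to the string `s`. Atomic tokens satisfy it by definition;
a non-atomic token must satisfy Reachability and Priority dominance. -/
def PLTC (D : Dict α) (s t : Token α) : Prop :=
  t.length = 1 ∨
    (1 < t.length ∧
      InPath D (theta D (dropSuffix s (suc D t))) (pre D t) ∧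
      (theta D (dropSuffix s (suc D t)) ≠ pre D t →
        ∀ u : Token α, 1 < u.length → IsCanonical D u → suc D u = pre D t →
          InPath D (theta D (dropSuffix s (suc D t))) u →
          canonIdx D t < canonIdx D u))

/-!
Each step of `applyRule` can be undone across any cut of its output, so a boundary that survives
the whole tokenization of `a ++ b` was respected at every earlier stage (`Splits`). Hence the final
last token of `s` is still tokenized, at each stage `k`, as the end of `s` is, and unfolding it one
canonical rule at a time shows that the last token of stage `k` is an iterated successor, reached
only through rules of index at least `k`.

For `t = theta D s` with canonical rule `(p, q)` of index `j` and `s = a ++ p ++ q`, the rule merges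
`p` with `q` at stage `j + 1`. The scan therefore left `p` unmerged up to that point, so `p` is the
last token of `a ++ p` at stage `j + 1`; the previous fact for `a ++ p` and `k = j + 1` is the
condition.
-/

section Lists

variable {β : Type*}

theorem getLastD_nil_suffix_flatten (L : List (List β)) : L.getLastD [] <:+ L.flatten := by
  rcases List.eq_nil_or_concat L with rfl | ⟨L, b, rfl⟩ <;>
    simp [List.getLastD_eq_getLast?]

theorem dropSuffix_append (s u : List β) : dropSuffix (s ++ u) u = s := by
  simp [dropSuffix]

end Lists

section ApplyRule

theorem flatten_applyRule (r : Rule α) (φ : List (Token α)) :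
    (applyRule r φ).flatten = φ.flatten := by
  fun_induction applyRule r φ <;> simp_all

theorem nil_notMem_applyRule {r : Rule α} {φ : List (Token α)} (h : [] ∉ φ) :
    [] ∉ applyRule r φ := by
  fun_induction applyRule r φ <;> simp_all

theorem applyRule_eq_nil_iff {r : Rule α} {φ : List (Token α)} :
    applyRule r φ = [] ↔ φ = [] := by
  fun_cases applyRule r φ <;> simp

theorem eq_of_applyRule_eq_singleton {r : Rule α} {φ : List (Token α)} {t : Token α}
    (h : applyRule r φ = [t]) : φ = [t] ∨ φ = [r.1, r.2] := by
  revert h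
  fun_cases applyRule r φ <;> simp_all [applyRule_eq_nil_iff]

theorem exists_append_of_applyRule_eq_append {r : Rule α} {φ C E : List (Token α)}
    (h : applyRule r φ = C ++ E) :
    ∃ A B, φ = A ++ B ∧ applyRule r A = C ∧ applyRule r B = E := by
  rcases C with _ | ⟨c, C⟩
  · exact ⟨[], φ, rfl, rfl, h⟩
  fun_induction applyRule r φ generalizing c C with
  | case1 => simp at h
  | case2 t =>
    simp only [List.cons_append, List.cons.injEq, List.nil_eq, List.append_eq_nil_iff] at h
    obtain ⟨rfl, rfl, rfl⟩ := h
    exact ⟨[t], [], rfl, rfl, rfl⟩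
  | case3 t u rest hmerge ih =>
    obtain ⟨rfl, h_tail⟩ := List.cons.inj h
    rcases C with _ | ⟨c, C⟩
    · exact ⟨[t, u], rest, rfl, by simp [applyRule, hmerge], h_tail⟩
    · obtain ⟨A, B, rfl, hA, hB⟩ := ih c C h_tail
      exact ⟨t :: u :: A, B, rfl, by simp [applyRule, hmerge, hA], hB⟩
  | case4 t u rest hmerge ih =>
    obtain ⟨rfl, h_tail⟩ := List.cons.inj h
    rcases C with _ | ⟨c, C⟩
    · exact ⟨[t], u :: rest, rfl, rfl, h_tail⟩
    · obtain ⟨_ | ⟨v, A⟩, B, hAB, hA, hB⟩ := ih c C h_tail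
      · simp [applyRule] at hA
      · obtain ⟨rfl, rfl⟩ := List.cons.inj hAB
        exact ⟨t :: u :: A, B, rfl, by rw [applyRule, if_neg hmerge, hA], hB⟩

/-- The only way the last token could differ is that the scan merges the final `x` to the left,
and it would then have done so in `P ++ [x, y]` as well. -/
theorem getLast?_applyRule_append_left {x y : Token α} (hx : x ≠ []) {P : List (Token α)}
    (h : (applyRule (x, y) (P ++ [x, y])).getLast? = some (x ++ y)) :
    (applyRule (x, y) (P ++ [x])).getLast? = some x := by
  have getLast?_cons (t v : Token α) (Q ψ : List (Token α)) :
      (t :: applyRule (x, y) (Q ++ v :: ψ)).getLast? =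
        (applyRule (x, y) (Q ++ v :: ψ)).getLast? :=
    List.getLast?_cons_of_ne_nil (by simp [applyRule_eq_nil_iff])
  induction P using applyRule.induct (x, y) with
  | case1 => rfl
  | case2 t =>
    by_cases hmerge : t = x ∧ x = y
    · simp_all [applyRule]
    · simp [applyRule, hmerge]
  | case3 t u rest hmerge ih =>
    simp only [List.cons_append, applyRule, if_pos hmerge, getLast?_cons] at h ⊢
    exact ih h
  | case4 t u rest hmerge ih =>
    simp only [List.cons_append, applyRule, if_neg hmerge] at h ⊢
    rw [← List.cons_append, getLast?_cons] at h ⊢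
    exact ih h

end ApplyRule

section Tokenize

variable {D D₁ : Dict α} {s a b t : List α} {C E : List (Token α)}

theorem phiK_eq_tokenize_take (D : Dict α) (k : ℕ) (s : List α) :
    phiK D k s = tokenize (D.take k) s := by
  rw [tokenize, phiK, phiK, List.take_length]

theorem tokenize_concat (D : Dict α) (r : Rule α) (s : List α) :
    tokenize (D ++ [r]) s = applyRule r (tokenize D s) := by
  simp only [tokenize, phiK, List.take_length, List.foldl_concat]

theorem flatten_tokenize (D : Dict α) (s : List α) : (tokenize D s).flatten = s := by
  induction D using List.reverseRecOn with
  | nil => simp [tokenize, phiK, phi0, ← List.flatMap_def]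
  | append_singleton D r ih => rw [tokenize_concat, flatten_applyRule, ih]

theorem nil_notMem_tokenize (D : Dict α) (s : List α) : [] ∉ tokenize D s := by
  induction D using List.reverseRecOn with
  | nil => simp [tokenize, phiK, phi0]
  | append_singleton D r ih => exact tokenize_concat D r s ▸ nil_notMem_applyRule ih

theorem tokenize_eq_nil_iff : tokenize D s = [] ↔ s = [] := by
  induction D using List.reverseRecOn with
  | nil => simp [tokenize, phiK, phi0]
  | append_singleton D r ih => rw [tokenize_concat, applyRule_eq_nil_iff, ih]

theorem tokenize_flatten_of_eq_append (h : tokenize D s = C ++ E) :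
    tokenize D C.flatten = C ∧ tokenize D E.flatten = E := by
  induction D using List.reverseRecOn generalizing C E with
  | nil =>
    obtain ⟨a, b, -, rfl, rfl⟩ := List.map_eq_append_iff.1 (show phi0 s = C ++ E from h)
    exact ⟨congrArg phi0 (flatten_tokenize [] a), congrArg phi0 (flatten_tokenize [] b)⟩
  | append_singleton D r ih =>
    rw [tokenize_concat] at h
    obtain ⟨A, B, hAB, rfl, rfl⟩ := exists_append_of_applyRule_eq_append h
    obtain ⟨hA, hB⟩ := ih hAB
    simp only [tokenize_concat, flatten_applyRule, hA, hB, and_self]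

/-- `Splits D a b`: tokenizing `a ++ b` with `D` never merges across the boundary between `a` and
`b`. That no intermediate stage does so either is `Splits.of_prefix`. -/
def Splits (D : Dict α) (a b : List α) : Prop :=
  tokenize D (a ++ b) = tokenize D a ++ tokenize D b

theorem splits_flatten_of_tokenize_eq_append (h : tokenize D s = C ++ E) :
    Splits D C.flatten E.flatten := by
  obtain ⟨hC, hE⟩ := tokenize_flatten_of_eq_append h
  rw [Splits, hC, hE, ← List.flatten_append, ← h, flatten_tokenize]

theorem Splits.of_prefix (h : Splits D a b) (hD : D₁ <+: D) : Splits D₁ a b := by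
  obtain ⟨D₂, rfl⟩ := hD
  induction D₂ using List.reverseRecOn with
  | nil => simpa using h
  | append_singleton D₂ r ih =>
    apply ih
    rw [← List.append_assoc, Splits, tokenize_concat] at h
    obtain ⟨A, B, hAB, hA, hB⟩ := exists_append_of_applyRule_eq_append h
    have hA : A.flatten = a := by rw [← flatten_applyRule r, hA, flatten_tokenize]
    have hB : B.flatten = b := by rw [← flatten_applyRule r, hB, flatten_tokenize]
    exact hA ▸ hB ▸ splits_flatten_of_tokenize_eq_append hAB

theorem IsCanonical.of_prefix (h : IsCanonical D₁ t) (hD : D₁ <+: D) : IsCanonical D t := by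
  obtain ⟨D₂, rfl⟩ := hD
  induction D₂ using List.reverseRecOn with
  | nil => simpa using h
  | append_singleton D₂ r ih =>
    rw [IsCanonical, ← List.append_assoc, tokenize_concat, ih, applyRule]

theorem isCanonical_of_length_eq_one (D : Dict α) (ht : t.length = 1) : IsCanonical D t := by
  obtain ⟨c, rfl⟩ := List.length_eq_one_iff.1 ht
  exact IsCanonical.of_prefix (D₁ := []) rfl D.nil_prefix

theorem IsCanonical.ne_nil (h : IsCanonical D t) : t ≠ [] := by
  rw [ne_eq, ← tokenize_eq_nil_iff (D := D), h]
  exact List.cons_ne_nil _ _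

theorem IsCanonical.length_eq_one_or_one_lt (h : IsCanonical D t) :
    t.length = 1 ∨ 1 < t.length := by
  have := List.length_pos_of_ne_nil h.ne_nil
  omega

end Tokenize

section LastToken

variable {D D₁ : Dict α} {s a b t : List α}

theorem theta_eq_of_getLast? (h : (tokenize D s).getLast? = some t) : theta D s = t := by
  rw [theta, List.getLastD_eq_getLast?, h, Option.getD_some]

theorem exists_tokenize_eq_append_theta (D : Dict α) (hs : s ≠ []) :
    ∃ L, tokenize D s = L ++ [theta D s] := by
  obtain ⟨L, b, h⟩ := (List.eq_nil_or_concat (tokenize D s)).resolve_left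
    (tokenize_eq_nil_iff.not.2 hs)
  rw [List.concat_eq_append] at h
  obtain rfl : theta D s = b := theta_eq_of_getLast? (by rw [h, List.getLast?_concat])
  exact ⟨L, h⟩

theorem IsCanonical.theta_eq (h : IsCanonical D t) : theta D t = t :=
  theta_eq_of_getLast? (by rw [h, List.getLast?_singleton])

theorem Splits.theta_append (h : Splits D a b) (hb : b ≠ []) :
    theta D (a ++ b) = theta D b := by
  obtain ⟨L, hL⟩ := exists_tokenize_eq_append_theta D hb
  refine theta_eq_of_getLast? ?_
  rw [h, hL, ← List.append_assoc, List.getLast?_concat]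

theorem theta_suffix (D : Dict α) (s : List α) : theta D s <:+ s := by
  have h := getLastD_nil_suffix_flatten (tokenize D s)
  rwa [flatten_tokenize] at h

theorem isCanonical_theta (D : Dict α) (hs : s ≠ []) : IsCanonical D (theta D s) := by
  obtain ⟨L, hL⟩ := exists_tokenize_eq_append_theta D hs
  simpa only [IsCanonical, List.flatten_singleton] using (tokenize_flatten_of_eq_append hL).2

theorem exists_splits_theta (D : Dict α) (hs : s ≠ []) :
    ∃ a, a ++ theta D s = s ∧ Splits D a (theta D s) := by
  obtain ⟨L, hL⟩ := exists_tokenize_eq_append_theta D hs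
  refine ⟨L.flatten, ?_, by simpa using splits_flatten_of_tokenize_eq_append hL⟩
  simpa [hL] using flatten_tokenize D s

theorem theta_theta_of_prefix (hs : s ≠ []) (hD : D₁ <+: D) :
    theta D₁ (theta D s) = theta D₁ s := by
  obtain ⟨a, has, ha⟩ := exists_splits_theta D hs
  rw [← (ha.of_prefix hD).theta_append (isCanonical_theta D hs).ne_nil, has]

end LastToken

section CanonicalRule

variable {D : Dict α} {t : Token α}

theorem exists_isCanonicalRuleIdx (ht : 1 < t.length) (hc : IsCanonical D t) :
    ∃ j, IsCanonicalRuleIdx D t j := by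
  have h_start : phiK D 0 t ≠ [t] := by
    intro h
    have hlen := congrArg List.length h
    simp only [phiK, phi0, List.take_zero, List.foldl_nil, List.length_map,
      List.length_singleton] at hlen
    omega
  obtain ⟨j, h_before, h_after⟩ :=
    Nat.exists_not_and_succ_of_not_zero_of_exists (p := fun k ↦ phiK D k t = [t]) h_start
      ⟨D.length, hc⟩
  have hj : j < D.length := by
    by_contra! hj
    rw [phiK, List.take_of_length_le (by omega)] at h_before h_after
    exact h_before h_after
  refine ⟨j, hj, ?_, h_after⟩
  rw [phiK_eq_tokenize_take, List.take_succ_eq_append_getElem hj, tokenize_concat,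
    ← phiK_eq_tokenize_take] at h_after
  rw [(eq_of_applyRule_eq_singleton h_after).resolve_left h_before]
  rfl

theorem isCanonicalRuleIdx_canonIdx (ht : 1 < t.length) (hc : IsCanonical D t) :
    IsCanonicalRuleIdx D t (canonIdx D t) := by
  have hex := exists_isCanonicalRuleIdx ht hc
  rw [canonIdx, dif_pos hex]
  exact hex.choose_spec

theorem tokenize_take_canonIdx (ht : 1 < t.length) (hc : IsCanonical D t) :
    tokenize (D.take (canonIdx D t)) t = [pre D t, suc D t] := by
  obtain ⟨x, y, hxy⟩ := List.length_eq_two.1 (isCanonicalRuleIdx_canonIdx ht hc).2.1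
  simp [pre, suc, ← phiK_eq_tokenize_take, hxy]

theorem pre_append_suc (ht : 1 < t.length) (hc : IsCanonical D t) :
    pre D t ++ suc D t = t := by
  simpa [tokenize_take_canonIdx ht hc] using flatten_tokenize (D.take (canonIdx D t)) t

theorem pre_ne_nil (ht : 1 < t.length) (hc : IsCanonical D t) : pre D t ≠ [] := by
  have h := nil_notMem_tokenize (D.take (canonIdx D t)) t
  rw [tokenize_take_canonIdx ht hc] at h
  exact (List.ne_of_not_mem_cons h).symm

theorem length_suc_lt (ht : 1 < t.length) (hc : IsCanonical D t) :
    (suc D t).length < t.length := by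
  have hpre := List.length_pos_of_ne_nil (pre_ne_nil ht hc)
  have hlen := congrArg List.length (pre_append_suc ht hc)
  rw [List.length_append] at hlen
  omega

theorem splits_pre_suc (ht : 1 < t.length) (hc : IsCanonical D t) :
    Splits (D.take (canonIdx D t)) (pre D t) (suc D t) := by
  simpa using splits_flatten_of_tokenize_eq_append (C := [_]) (tokenize_take_canonIdx ht hc)

theorem isCanonical_suc (ht : 1 < t.length) (hc : IsCanonical D t) :
    IsCanonical D (suc D t) := by
  have h := (tokenize_flatten_of_eq_append (C := [_]) (tokenize_take_canonIdx ht hc)).2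
  rw [List.flatten_singleton] at h
  exact IsCanonical.of_prefix h (D.take_prefix _)

theorem isCanonical_take_of_canonIdx_lt {k : ℕ} (ht : 1 < t.length) (hc : IsCanonical D t)
    (hk : canonIdx D t < k) : IsCanonical (D.take k) t := by
  have h := (isCanonicalRuleIdx_canonIdx ht hc).2.2
  rw [phiK_eq_tokenize_take] at h
  exact IsCanonical.of_prefix h (D.take_prefix_take_left hk)

theorem take_canonIdx_succ (ht : 1 < t.length) (hc : IsCanonical D t) :
    D.take (canonIdx D t + 1) = D.take (canonIdx D t) ++ [(pre D t, suc D t)] := by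
  have hlt := (isCanonicalRuleIdx_canonIdx ht hc).1
  have hcan := isCanonical_take_of_canonIdx_lt ht hc (Nat.lt_succ_self _)
  rw [List.take_succ_eq_append_getElem hlt] at hcan ⊢
  rw [IsCanonical, tokenize_concat, tokenize_take_canonIdx ht hc] at hcan
  obtain ⟨hpre, hsuc⟩ : pre D t = D[canonIdx D t].1 ∧ suc D t = D[canonIdx D t].2 := by
    simpa using eq_of_applyRule_eq_singleton hcan
  rw [hpre, hsuc]

theorem IsCanonical.suc_induction {motive : ∀ t, IsCanonical D t → Prop}
    (atomic : ∀ t (ht : t.length = 1), motive t (isCanonical_of_length_eq_one D ht))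
    (merge : ∀ t (ht : 1 < t.length) (hc : IsCanonical D t),
      motive (suc D t) (isCanonical_suc ht hc) → motive t hc)
    (t : Token α) (hc : IsCanonical D t) : motive t hc := by
  rcases hc.length_eq_one_or_one_lt with ht | ht
  · exact atomic t ht
  · exact merge t ht hc (IsCanonical.suc_induction atomic merge _ (isCanonical_suc ht hc))
termination_by t.length
decreasing_by exact length_suc_lt ht hc

end CanonicalRule

section AncestorPath

variable {D : Dict α} {s t z u : List α} {k : ℕ}

theorem inPath_iff : InPath D z u ↔ z = u ∨ InPath D (suc D z) u := by
  constructor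
  · rintro ⟨_ | n, h⟩
    · exact .inl h
    · exact .inr ⟨n, h⟩
  · rintro (h | ⟨n, h⟩)
    · exact ⟨0, h⟩
    · exact ⟨n + 1, h⟩

theorem suc_suffix (D : Dict α) (t : Token α) : suc D t <:+ t := by
  rw [suc, phiK_eq_tokenize_take]
  exact theta_suffix _ t

theorem InPath.suffix (h : InPath D z u) : u <:+ z := by
  obtain ⟨n, rfl⟩ := h
  induction n with
  | zero => exact List.suffix_rfl
  | succ n ih => exact Function.iterate_succ_apply' (suc D) n z ▸ (suc_suffix D _).trans ih

theorem theta_take_of_le_canonIdx (ht : 1 < t.length) (hc : IsCanonical D t)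
    (hk : k ≤ canonIdx D t) : theta (D.take k) t = theta (D.take k) (suc D t) := by
  have hsplit := (splits_pre_suc ht hc).of_prefix (D.take_prefix_take_left hk)
  rw [← hsplit.theta_append (isCanonical_suc ht hc).ne_nil, pre_append_suc ht hc]

theorem IsCanonical.inPath_theta_take (hc : IsCanonical D z) (k : ℕ) :
    InPath D z (theta (D.take k) z) := by
  induction z, hc using IsCanonical.suc_induction with
  | atomic z hz => exact inPath_iff.2 (.inl (isCanonical_of_length_eq_one _ hz).theta_eq.symm)
  | merge z hz hc ih =>
    rcases lt_or_ge (canonIdx D z) k with hk | hk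
    · exact inPath_iff.2 (.inl (isCanonical_take_of_canonIdx_lt hz hc hk).theta_eq.symm)
    · exact inPath_iff.2 (.inr (theta_take_of_le_canonIdx hz hc hk ▸ ih))

theorem IsCanonical.le_canonIdx_of_suc_eq_theta_take (hz : IsCanonical D z)
    (hu : 1 < u.length) (huc : IsCanonical D u) (hzu : InPath D z u)
    (hsuc : suc D u = theta (D.take k) z) : k ≤ canonIdx D u := by
  have theta_ne {v : Token α} (hv : InPath D v u) (hsuc : suc D u = theta (D.take k) v) :
      theta (D.take k) v ≠ v := by
    intro h
    have hlt := length_suc_lt hu huc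
    rw [hsuc, h] at hlt
    exact hlt.not_ge hv.suffix.length_le
  induction z, hz using IsCanonical.suc_induction with
  | atomic z hz => exact absurd (isCanonical_of_length_eq_one _ hz).theta_eq (theta_ne hzu hsuc)
  | merge z hz hc ih =>
    have hk : k ≤ canonIdx D z := by
      by_contra! hk
      exact theta_ne hzu hsuc (isCanonical_take_of_canonIdx_lt hz hc hk).theta_eq
    rcases inPath_iff.1 hzu with rfl | hzu
    · exact hk
    · exact ih hzu (hsuc.trans (theta_take_of_le_canonIdx hz hc hk))

theorem inPath_theta_theta_take (D : Dict α) (hs : s ≠ []) (k : ℕ) :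
    InPath D (theta D s) (theta (D.take k) s) := by
  rw [← theta_theta_of_prefix hs (D.take_prefix k)]
  exact (isCanonical_theta D hs).inPath_theta_take k

theorem le_canonIdx_of_inPath_theta (hs : s ≠ []) (hu : 1 < u.length)
    (huc : IsCanonical D u) (hpath : InPath D (theta D s) u)
    (hsuc : suc D u = theta (D.take k) s) : k ≤ canonIdx D u := by
  rw [← theta_theta_of_prefix hs (D.take_prefix k)] at hsuc
  exact (isCanonical_theta D hs).le_canonIdx_of_suc_eq_theta_take hu huc hpath hsuc

end AncestorPath

theorem theta_take_append_pre {D : Dict α} {a t : List α} (ht : 1 < t.length)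
    (hc : IsCanonical D t) (ha : Splits D a t) :
    theta (D.take (canonIdx D t + 1)) (a ++ pre D t) = pre D t := by
  have hstage : tokenize (D.take (canonIdx D t)) (a ++ t) =
      tokenize (D.take (canonIdx D t)) a ++ [pre D t, suc D t] := by
    rw [ha.of_prefix (D.take_prefix _), tokenize_take_canonIdx ht hc]
  have hpre : tokenize (D.take (canonIdx D t)) (a ++ pre D t) =
      tokenize (D.take (canonIdx D t)) a ++ [pre D t] := by
    have h := hstage.trans (List.append_cons _ _ _)
    simpa [flatten_tokenize] using (tokenize_flatten_of_eq_append h).1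
  have hmerge : (tokenize (D.take (canonIdx D t + 1)) (a ++ t)).getLast? = some t := by
    rw [ha.of_prefix (D.take_prefix _),
      isCanonical_take_of_canonIdx_lt ht hc (Nat.lt_succ_self _), List.getLast?_concat]
  refine theta_eq_of_getLast? ?_
  rw [take_canonIdx_succ ht hc, tokenize_concat] at hmerge ⊢
  rw [hstage] at hmerge
  rw [hpre]
  apply getLast?_applyRule_append_left (pre_ne_nil ht hc)
  rw [hmerge, pre_append_suc ht hc]

theorem last_token_satisfies_general (D : Dict α) (s : List α) (hs : s ≠ []) :
    IsCanonical D (theta D s) ∧ theta D s <:+ s ∧ PLTC D s (theta D s) := by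
  have hc := isCanonical_theta D hs
  refine ⟨hc, theta_suffix D s, ?_⟩
  obtain ⟨a, has, ha⟩ := exists_splits_theta D hs
  rcases hc.length_eq_one_or_one_lt with ht | ht
  · exact .inl ht
  have hdrop : dropSuffix s (suc D (theta D s)) = a ++ pre D (theta D s) := by
    rw [← dropSuffix_append (a ++ pre D (theta D s)) (suc D (theta D s)), List.append_assoc,
      pre_append_suc ht hc, has]
  have hne : a ++ pre D (theta D s) ≠ [] :=
    List.append_ne_nil_of_right_ne_nil _ (pre_ne_nil ht hc)
  have hlast := theta_take_append_pre ht hc ha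
  rw [PLTC, hdrop]
  refine .inr ⟨ht, ?_, fun _ u hu huc hsuc hpath ↦ ?_⟩
  · simpa only [hlast] using inPath_theta_theta_take D hne (canonIdx D (theta D s) + 1)
  · exact le_canonIdx_of_inPath_theta hne hu huc hpath (hsuc.trans hlast.symm)

/-- **The last token satisfies the condition.** For every nonempty string `s`,
`θ(s)` is a canonical suffix token of `s` and satisfies the Prefix Last-Token
Condition with respect to `s`. -/
theorem last_token_satisfies [Fintype α] (D : Dict α) (hD : ValidDict D)
    (s : List α) (hs : s ≠ []) :
    IsCanonical D (theta D s) ∧ theta D s <:+ s ∧ PLTC D s (theta D s) :=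
  last_token_satisfies_general D s hs

end BPE
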